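/- Let 0 < α < 1 and 0 < β < 1, let n be a natural number, and let M be the 2×2 real matrix [[c₁(n), 1], [1, c₄(n)]], where c₁(n) = −Γ(α+1)Γ(−β)/(Γ(α−n)Γ(n−β+1)) and c₄(n) = β·Γ(1−α)Γ(β)/(α·Γ(n−α+1)Γ(β−n)). Then for every vector v = (v₀, v₁) ∈ ℝ², M·v = (c₁(n)·v₀ + v₁) • (1, c₄(n)); in particular the range of M is spanned by the vector (1, c₄(n)). (This is the eigenvector-direction computation of Corollary 4.4: in the spectral representation, the eigenvector of A₀ at λₙ points in the direction (1, c₄(n)).) -/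

import Mathlib

/-!
Euler's reflection formula turns the product of the two diagonal entries into
`c₁(z) c₄(z) = sin π(α - z) sin π(β - z) / (sin πα sin πβ)`. At an integer `z` both sines change by
the same sign, so the product is `1`. Hence the second row of the matrix is `c₄` times the first:
the matrix is the outer product of `(1, c₄)` and `(c₁, 1)`, and its range is the line through
`(1, c₄)`.
-/

open Real Matrix

theorem range_mulVecLin_vecMulVec {R m n : Type*} [CommSemiring R] [Fintype n]
    (u : m → R) {w x : n → R} (hwx : w ⬝ᵥ x = 1) :
    LinearMap.range (vecMulVec u w).mulVecLin = Submodule.span R {u} := by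
  have hsurj : Function.Surjective (dotProductBilin R R w) := fun r ↦
    ⟨r • x, by rw [map_smul, dotProductBilin_apply_apply, hwx, smul_eq_mul, mul_one]⟩
  rw [← LinearMap.range_smulRight_apply_of_surjective hsurj u]
  congr 1
  ext1 v
  simp [vecMulVec_mulVec]

theorem fin_two_eq_vecMulVec_of_mul_eq_one {R : Type*} [MulOneClass R] {a d : R}
    (had : d * a = 1) : !![a, 1; 1, d] = vecMulVec ![1, d] ![a, 1] := by
  ext i j
  fin_cases i <;> fin_cases j <;> simp [vecMulVec_apply, had]

theorem sin_pi_mul_ne_zero_of_notMem_range_intCast {x : ℝ}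
    (hx : x ∉ Set.range ((↑) : ℤ → ℝ)) : sin (π * x) ≠ 0 := by
  intro h
  obtain ⟨m, hm⟩ := sin_eq_zero_iff.mp h
  exact hx ⟨m, mul_left_cancel₀ pi_ne_zero (by rw [← hm, mul_comm])⟩

theorem sin_pi_mul_sub_intCast (x : ℝ) (n : ℤ) :
    sin (π * (x - n)) = (-1) ^ n * sin (π * x) := by
  rw [mul_sub, mul_comm π (n : ℝ), sin_sub_int_mul_pi]

theorem notMem_range_intCast_of_pos_of_lt_one {R : Type*} [Ring R] [LinearOrder R]
    [IsStrictOrderedRing R] {x : R} (h0 : 0 < x) (h1 : x < 1) :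
    x ∉ Set.range ((↑) : ℤ → R) := by
  rintro ⟨m, rfl⟩
  norm_cast at h0 h1
  lia

/-- The coefficient `c₁(z)`; at `z = n` it is the upper diagonal entry of the matrix whose range is
the eigenvector direction of `A₀` at `λₙ` in the spectral representation. -/
noncomputable def gammaCoeffOne (α β z : ℝ) : ℝ :=
  -Gamma (α + 1) * Gamma (-β) / (Gamma (α - z) * Gamma (z - β + 1))

/-- The coefficient `c₄(z)`; at `z = n` it is the lower diagonal entry of the same matrix, and the
slope of the eigenvector direction. -/
noncomputable def gammaCoeffFour (α β z : ℝ) : ℝ :=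
  β * Gamma (1 - α) * Gamma β / (α * Gamma (z - α + 1) * Gamma (β - z))

theorem gammaCoeffFour_mul_gammaCoeffOne {α β : ℝ} (hα : α ≠ 0) (hβ : β ≠ 0) (z : ℝ) :
    gammaCoeffFour α β z * gammaCoeffOne α β z =
      sin (π * (α - z)) * sin (π * (β - z)) / (sin (π * α) * sin (π * β)) := by
  have hΓα : Gamma (α + 1) = α * Gamma α := Gamma_add_one hα
  have hΓβ : Gamma (1 - β) = -β * Gamma (-β) := by
    rw [← Gamma_add_one (neg_ne_zero.mpr hβ), neg_add_eq_sub]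
  have reflect_sub (x : ℝ) : Gamma (x - z) * Gamma (z - x + 1) = π / sin (π * (x - z)) := by
    rw [← Gamma_mul_Gamma_one_sub, show z - x + 1 = 1 - (x - z) by ring]
  calc gammaCoeffFour α β z * gammaCoeffOne α β z
      = α * ((Gamma α * Gamma (1 - α)) * (Gamma β * Gamma (1 - β))) /
          (α * ((Gamma (α - z) * Gamma (z - α + 1)) * (Gamma (β - z) * Gamma (z - β + 1)))) := by
        rw [gammaCoeffOne, gammaCoeffFour, div_mul_div_comm, hΓα, hΓβ]
        ring
    _ = π / sin (π * α) * (π / sin (π * β)) /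
          (π / sin (π * (α - z)) * (π / sin (π * (β - z)))) := by
        rw [mul_div_mul_left _ _ hα, Gamma_mul_Gamma_one_sub, Gamma_mul_Gamma_one_sub,
          reflect_sub, reflect_sub]
    _ = sin (π * (α - z)) * sin (π * (β - z)) / (sin (π * α) * sin (π * β)) := by
        field_simp

theorem gammaCoeffFour_mul_gammaCoeffOne_intCast {α β : ℝ} (hα : α ∉ Set.range ((↑) : ℤ → ℝ))
    (hβ : β ∉ Set.range ((↑) : ℤ → ℝ)) (n : ℤ) :
    gammaCoeffFour α β n * gammaCoeffOne α β n = 1 := by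
  have hα0 : α ≠ 0 := fun h ↦ hα ⟨0, by rw [h, Int.cast_zero]⟩
  have hβ0 : β ≠ 0 := fun h ↦ hβ ⟨0, by rw [h, Int.cast_zero]⟩
  have hsinα := sin_pi_mul_ne_zero_of_notMem_range_intCast hα
  have hsinβ := sin_pi_mul_ne_zero_of_notMem_range_intCast hβ
  have hsign : ((-1 : ℝ) ^ n) * (-1) ^ n = 1 := by simp [← mul_zpow]
  rw [gammaCoeffFour_mul_gammaCoeffOne hα0 hβ0, sin_pi_mul_sub_intCast, sin_pi_mul_sub_intCast,
    mul_mul_mul_comm, hsign, one_mul, div_self (mul_ne_zero hsinα hsinβ)]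

theorem eigenvector_direction_general {α β : ℝ} (hα : α ∉ Set.range ((↑) : ℤ → ℝ))
    (hβ : β ∉ Set.range ((↑) : ℤ → ℝ)) (n : ℤ) (c₁ c₄ : ℝ)
    (hc₁ : c₁ = gammaCoeffOne α β n) (hc₄ : c₄ = gammaCoeffFour α β n)
    (M : Matrix (Fin 2) (Fin 2) ℝ) (hM : M = !![c₁, 1; 1, c₄]) :
    (∀ v : Fin 2 → ℝ, M.mulVec v = (c₁ * v 0 + v 1) • ![1, c₄]) ∧
      LinearMap.range M.mulVecLin = Submodule.span ℝ {![1, c₄]} := by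
  have hmul : c₄ * c₁ = 1 := by
    rw [hc₁, hc₄, gammaCoeffFour_mul_gammaCoeffOne_intCast hα hβ]
  have houter : M = vecMulVec ![1, c₄] ![c₁, 1] := by
    rw [hM, fin_two_eq_vecMulVec_of_mul_eq_one hmul]
  rw [houter]
  refine ⟨fun v ↦ ?_, range_mulVecLin_vecMulVec (x := ![0, 1]) _ (by simp)⟩
  rw [vecMulVec_mulVec, op_smul_eq_smul, vec2_dotProduct]
  simp only [cons_val_zero, cons_val_one, one_mul]

theorem eigenvector_direction (α β : ℝ) (hα0 : 0 < α) (hα1 : α < 1)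
    (hβ0 : 0 < β) (hβ1 : β < 1) (n : ℕ)
    (c₁ c₄ : ℝ)
    (hc₁ : c₁ = -Real.Gamma (α + 1) * Real.Gamma (-β) /
        (Real.Gamma (α - n) * Real.Gamma (n - β + 1)))
    (hc₄ : c₄ = β * Real.Gamma (1 - α) * Real.Gamma β /
        (α * Real.Gamma (n - α + 1) * Real.Gamma (β - n)))
    (M : Matrix (Fin 2) (Fin 2) ℝ) (hM : M = !![c₁, 1; 1, c₄]) :
    (∀ v : Fin 2 → ℝ, M.mulVec v = (c₁ * v 0 + v 1) • ![1, c₄]) ∧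
      LinearMap.range M.mulVecLin = Submodule.span ℝ {![1, c₄]} :=
  eigenvector_direction_general (notMem_range_intCast_of_pos_of_lt_one hα0 hα1)
    (notMem_range_intCast_of_pos_of_lt_one hβ0 hβ1) n c₁ c₄ (mod_cast hc₁) (mod_cast hc₄) M hM
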